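/- (Correctness of the reduction proving NP-completeness of the Cover Decoding Problem) Let G ∈ F_q^{k×n} with rows g_1, …, g_k, let r ∈ F_q^n, and let t ≤ n be a positive integer. For each i define G_i ∈ F_q^{(t+1)×n} by stacking the row g_i exactly t+1 times, and define R ∈ F_q^{(t+1)×n} by stacking r exactly t+1 times. Then there exists e ∈ F_q^n with wt_H(e) ≤ t and r − e in the row span of G if and only if there exists E ∈ F_q^{(t+1)×n} with wt_C(E) ≤ t and R − E in the F_q-span of G_1, …, G_k. -/

import Mathlib

/-- A cover of a matrix `A` is a set of lines (rows, encoded as `Sum.inl`, and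
columns, encoded as `Sum.inr`) such that every nonzero entry of `A` lies in one
of these lines. -/
def IsCover {F : Type*} [Field F] {m n : ℕ} (A : Matrix (Fin m) (Fin n) F)
    (S : Finset (Fin m ⊕ Fin n)) : Prop :=
  ∀ i j, A i j ≠ 0 → Sum.inl i ∈ S ∨ Sum.inr j ∈ S

/-- The cover weight of a matrix: the minimum cardinality of a cover. -/
noncomputable def coverWt {F : Type*} [Field F] {m n : ℕ}
    (A : Matrix (Fin m) (Fin n) F) : ℕ :=
  sInf {c | ∃ S : Finset (Fin m ⊕ Fin n), IsCover A S ∧ S.card = c}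

/-!
A cover with fewer lines than the matrix has rows leaves out some row, and the nonzero entries of
that row are then covered by columns, so its Hamming weight is at most the number of lines. Hence
some row of `E` can serve as the error vector `e`. Conversely, the columns in the support of `e`
cover any number of stacked copies of `e`.
-/

section CoverDecoding

open Matrix

variable {F : Type*} [Field F] {m n : ℕ} {A : Matrix (Fin m) (Fin n) F}

theorem exists_isCover_card_eq_coverWt (A : Matrix (Fin m) (Fin n) F) :
    ∃ S : Finset (Fin m ⊕ Fin n), IsCover A S ∧ S.card = coverWt A :=
  have univ_isCover : IsCover A Finset.univ := fun _ _ _ ↦ Or.inl (Finset.mem_univ _)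
  Nat.sInf_mem (s := {c | ∃ S, IsCover A S ∧ S.card = c}) ⟨_, _, univ_isCover, rfl⟩

theorem IsCover.coverWt_le {S : Finset (Fin m ⊕ Fin n)} (hS : IsCover A S) :
    coverWt A ≤ S.card :=
  Nat.sInf_le ⟨S, hS, rfl⟩

theorem IsCover.hammingNorm_row_le [DecidableEq F] {S : Finset (Fin m ⊕ Fin n)}
    (hS : IsCover A S) {i : Fin m} (hi : Sum.inl i ∉ S) : hammingNorm (A i) ≤ S.card := by
  have support_subset : ({j | A i j ≠ 0} : Finset (Fin n)) ⊆ S.toRight := fun j hj ↦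
    Finset.mem_toRight.2 <| (hS i j (Finset.mem_filter_univ j |>.1 hj)).resolve_left hi
  exact (Finset.card_le_card support_subset).trans Finset.card_toRight_le

theorem exists_hammingNorm_row_le_coverWt [DecidableEq F] (hA : coverWt A < m) :
    ∃ i, hammingNorm (A i) ≤ coverWt A := by
  obtain ⟨S, hS, hcard⟩ := exists_isCover_card_eq_coverWt A
  have card_rows_lt : S.toLeft.card < Fintype.card (Fin m) := by
    rw [Fintype.card_fin]
    exact Finset.card_toLeft_le.trans_lt (hcard.trans_lt hA)
  obtain ⟨i, hi⟩ : ∃ i, i ∉ S.toLeft := by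
    simpa using Finset.exists_mem_notMem_of_card_lt_card card_rows_lt
  exact ⟨i, (hS.hammingNorm_row_le (mt Finset.mem_toLeft.2 hi)).trans_eq hcard⟩

theorem coverWt_replicateRow_le_hammingNorm [DecidableEq F] (e : Fin n → F) :
    coverWt (replicateRow (Fin m) e) ≤ hammingNorm e := by
  have support_isCover : IsCover (replicateRow (Fin m) e)
      (({j | e j ≠ 0} : Finset (Fin n)).map Function.Embedding.inr) := fun _ j hj ↦
    Or.inr (Finset.mem_map_of_mem _ (Finset.mem_filter_univ j |>.2 hj))
  exact support_isCover.coverWt_le.trans_eq (Finset.card_map _)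

theorem sum_smul_replicateRow {R ι κ ν : Type*} [NonUnitalNonAssocSemiring R] [Fintype κ]
    (u : κ → R) (G : Matrix κ ν R) :
    ∑ i, u i • replicateRow ι (G i) = replicateRow ι (u ᵥ* G) := by
  ext a j
  simp [Matrix.sum_apply, vecMul, dotProduct]

theorem cover_decoding_reduction_general [DecidableEq F] {κ : Type*} [Fintype κ]
    {t : ℕ} (G : Matrix κ (Fin n) F) (r : Fin n → F) (htm : t < m) :
    (∃ e : Fin n → F, hammingNorm e ≤ t ∧ ∃ x : κ → F, r - e = x ᵥ* G) ↔
    (∃ E : Matrix (Fin m) (Fin n) F, coverWt E ≤ t ∧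
      ∃ u : κ → F,
        replicateRow (Fin m) r - E = ∑ i, u i • replicateRow (Fin m) (G i)) := by
  simp only [sum_smul_replicateRow]
  constructor
  · rintro ⟨e, he, x, hx⟩
    exact ⟨replicateRow (Fin m) e, (coverWt_replicateRow_le_hammingNorm e).trans he, x,
      congrArg (replicateRow (Fin m)) hx⟩
  · rintro ⟨E, hE, u, hu⟩
    obtain ⟨i, hi⟩ := exists_hammingNorm_row_le_coverWt (hE.trans_lt htm)
    exact ⟨E i, hi.trans hE, u, congrFun hu i⟩

end CoverDecoding

open Matrix in
/-- Correctness of the reduction from the Hamming Decoding Problem to the Cover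
Decoding Problem: with `G_i` (resp. `R`) obtained by stacking the `i`-th row `g_i`
of `G` (resp. `r`) exactly `t+1` times, there exists `e` with `wt_H(e) ≤ t` and
`r − e` in the row span of `G` iff there exists `E` with `wt_C(E) ≤ t` and
`R − E` in the span of `G_1, …, G_k`. -/
theorem cover_decoding_reduction {F : Type*} [Field F] [Fintype F]
    [DecidableEq F] {q k n t : ℕ} (hq : Fintype.card F = q)
    (G : Matrix (Fin k) (Fin n) F) (r : Fin n → F) (ht : 0 < t) (htn : t ≤ n) :
    (∃ e : Fin n → F, hammingNorm e ≤ t ∧ ∃ x : Fin k → F, r - e = x ᵥ* G) ↔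
    (∃ E : Matrix (Fin (t + 1)) (Fin n) F, coverWt E ≤ t ∧
      ∃ u : Fin k → F,
        (Matrix.of fun _ : Fin (t + 1) => r) - E =
          ∑ i, u i • (Matrix.of fun _ : Fin (t + 1) => G i)) :=
  cover_decoding_reduction_general G r t.lt_succ_self
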